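/- For every n ≥ 3, the commutator subgroup [H_n, H_n] of the Houghton group H_n equals the subgroup of all finitely supported permutations of {1,…,n} × ℕ (the finitary symmetric group on {1,…,n} × ℕ). -/

import Mathlib

/-- A map `f : {1,…,n} × ℕ → {1,…,n} × ℕ` is an *eventual translation* if for each
`i` there exist `m_i ∈ ℤ` and `N_i ∈ ℕ` with `f (i, x) = (i, x + m_i)` for all `x ≥ N_i`. -/
def IsEvTrans {n : ℕ} (f : Fin n × ℕ → Fin n × ℕ) : Prop :=
  ∀ i : Fin n, ∃ m : ℤ, ∃ N : ℕ, ∀ x : ℕ, N ≤ x →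
    (f (i, x)).1 = i ∧ ((f (i, x)).2 : ℤ) = (x : ℤ) + m

lemma IsEvTrans.id {n : ℕ} : IsEvTrans (id : Fin n × ℕ → Fin n × ℕ) :=
  fun i => ⟨0, 0, fun x _ => by simp⟩

lemma IsEvTrans.comp {n : ℕ} {f g : Fin n × ℕ → Fin n × ℕ}
    (hf : IsEvTrans f) (hg : IsEvTrans g) : IsEvTrans (f ∘ g) := by
  intro i
  obtain ⟨m₁, N₁, h₁⟩ := hg i
  obtain ⟨m₂, N₂, h₂⟩ := hf i
  refine ⟨m₁ + m₂, max N₁ ((N₂ : ℤ) - m₁).toNat, fun x hx => ?_⟩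
  have hx₁ : N₁ ≤ x := le_trans (le_max_left _ _) hx
  obtain ⟨hg1, hg2⟩ := h₁ x hx₁
  have hgix : g (i, x) = (i, (g (i, x)).2) := Prod.ext hg1 rfl
  have hxa : ((N₂ : ℤ) - m₁).toNat ≤ x := le_trans (le_max_right _ _) hx
  have hxb : (N₂ : ℤ) - m₁ ≤ ((((N₂ : ℤ) - m₁).toNat : ℤ)) := Int.self_le_toNat _
  have hyN : N₂ ≤ (g (i, x)).2 := by
    have : (N₂ : ℤ) ≤ ((g (i, x)).2 : ℤ) := by omega
    exact_mod_cast this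
  obtain ⟨hf1, hf2⟩ := h₂ (g (i, x)).2 hyN
  constructor
  · show (f (g (i, x))).1 = i
    rw [hgix]; exact hf1
  · show ((f (g (i, x))).2 : ℤ) = (x : ℤ) + (m₁ + m₂)
    rw [hgix, hf2, hg2]; ring

lemma IsEvTrans.inv {n : ℕ} {f : Equiv.Perm (Fin n × ℕ)} (hf : IsEvTrans ⇑f) :
    IsEvTrans ⇑f.symm := by
  intro i
  obtain ⟨m, N, h⟩ := hf i
  refine ⟨-m, ((N : ℤ) + m).toNat, fun y hy => ?_⟩
  have hy' : (N : ℤ) + m ≤ (y : ℤ) :=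
    le_trans (Int.self_le_toNat _) (by exact_mod_cast hy)
  set x := ((y : ℤ) - m).toNat with hxdef
  have hx : (x : ℤ) = (y : ℤ) - m := Int.toNat_of_nonneg (by omega)
  have hxN : N ≤ x := by omega
  obtain ⟨h1, h2⟩ := h x hxN
  have hfx : f (i, x) = (i, y) := by
    have h3 : ((f (i, x)).2 : ℤ) = (y : ℤ) := by rw [h2]; omega
    exact Prod.ext h1 (by exact_mod_cast h3)
  have hsymm : f.symm (i, y) = (i, x) := by rw [← hfx]; exact f.symm_apply_apply _
  rw [hsymm]
  exact ⟨rfl, by omega⟩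

/-- The Houghton group `H_n`, as the subgroup of `Equiv.Perm (Fin n × ℕ)` consisting
of the eventual translations. -/
def Houghton (n : ℕ) : Subgroup (Equiv.Perm (Fin n × ℕ)) where
  carrier := {η | IsEvTrans ⇑η}
  one_mem' := IsEvTrans.id
  mul_mem' := fun ha hb => IsEvTrans.comp ha hb
  inv_mem' := fun ha => IsEvTrans.inv ha

/-- The monoid `M_n` of injective eventual translations, as a submonoid of
`Function.End (Fin n × ℕ)` (whose multiplication is composition). -/
def Mmon (n : ℕ) : Submonoid (Function.End (Fin n × ℕ)) where
  carrier := {f | Function.Injective f ∧ IsEvTrans f}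
  one_mem' := ⟨fun _ _ h => h, IsEvTrans.id⟩
  mul_mem' := fun ha hb => ⟨ha.1.comp hb.1, IsEvTrans.comp ha.2 hb.2⟩

open Classical in
/-- `χ_i(f)` : the unique integer `m` such that `f (i, x) = (i, x + m)` for all
sufficiently large `x` (or junk value `0` if no such integer exists). -/
noncomputable def chiF (n : ℕ) (i : Fin n) (f : Fin n × ℕ → Fin n × ℕ) : ℤ :=
  if h : ∃ m : ℤ, ∃ N : ℕ, ∀ x : ℕ, N ≤ x →
      (f (i, x)).1 = i ∧ ((f (i, x)).2 : ℤ) = (x : ℤ) + m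
  then h.choose else 0

/-- `f` translates the far end of ray `i` by `m`. -/
def EvT {n : ℕ} (f : Fin n × ℕ → Fin n × ℕ) (i : Fin n) (m : ℤ) : Prop :=
  ∃ N : ℕ, ∀ x : ℕ, N ≤ x → (f (i, x)).1 = i ∧ ((f (i, x)).2 : ℤ) = (x : ℤ) + m

lemma EvT.comp {n : ℕ} {f g : Fin n × ℕ → Fin n × ℕ} {i : Fin n} {a b : ℤ}
    (hf : EvT f i a) (hg : EvT g i b) : EvT (fun p => f (g p)) i (b + a) := by
  obtain ⟨N₁, h₁⟩ := hg
  obtain ⟨N₂, h₂⟩ := hf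
  refine ⟨max N₁ ((N₂ : ℤ) - b).toNat, fun x hx => ?_⟩
  obtain ⟨hg1, hg2⟩ := h₁ x (by omega)
  have hgix : g (i, x) = (i, (g (i, x)).2) := Prod.ext hg1 rfl
  obtain ⟨hf1, hf2⟩ := h₂ (g (i, x)).2 (by omega)
  rw [← hgix] at hf1 hf2
  exact ⟨hf1, by show ((f (g (i, x))).2 : ℤ) = _; omega⟩

lemma EvT.inv {n : ℕ} {f : Equiv.Perm (Fin n × ℕ)} {i : Fin n} {m : ℤ} (hf : EvT f i m) :
    EvT (f⁻¹ : Equiv.Perm (Fin n × ℕ)) i (-m) := by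
  obtain ⟨N, h⟩ := hf
  refine ⟨((N : ℤ) + m).toNat, fun y hy => ?_⟩
  obtain ⟨x, hx⟩ : ∃ x : ℕ, (x : ℤ) = (y : ℤ) - m :=
    ⟨((y : ℤ) - m).toNat, Int.toNat_of_nonneg (by omega)⟩
  obtain ⟨h1, h2⟩ := h x (by omega)
  have hfx : f (i, x) = (i, y) := Prod.ext h1 (by show (f (i, x)).2 = y; omega)
  have hsymm : f⁻¹ (i, y) = (i, x) := by rw [← hfx]; exact f.symm_apply_apply _
  rw [hsymm]
  exact ⟨rfl, by show (x : ℤ) = _; omega⟩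

/-- Elements of the Houghton group with trivial translation lengths. -/
def evFix (n : ℕ) : Subgroup (Houghton n) where
  carrier := {η | ∀ i, EvT (η : Equiv.Perm (Fin n × ℕ)) i 0}
  one_mem' := fun i => ⟨0, fun x _ => by simp⟩
  mul_mem' := fun {a b} ha hb i => (ha i).comp (hb i)
  inv_mem' := fun {a} ha i => by simpa using (ha i).inv

lemma commutator_le_evFix (n : ℕ) : commutator (Houghton n) ≤ evFix n := by
  rw [commutator_def, Subgroup.commutator_le]
  intro a _ b _ i
  obtain ⟨m, hm⟩ := a.2 i
  obtain ⟨k, hk⟩ := b.2 i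
  have hm' : EvT (a : Equiv.Perm (Fin n × ℕ)) i m := hm
  have hk' : EvT (b : Equiv.Perm (Fin n × ℕ)) i k := hk
  have h := hm'.comp (hk'.comp (hm'.inv.comp hk'.inv))
  have e : -k + -m + k + m = 0 := by ring
  rw [e] at h
  exact h

lemma evFix_finite {n : ℕ} {η : Houghton n} (h : η ∈ evFix n) :
    {p : Fin n × ℕ | (η : Equiv.Perm (Fin n × ℕ)) p ≠ p}.Finite := by
  choose N hN using h
  refine (Set.finite_iUnion (fun i : Fin n =>
    (Set.finite_Iio (N i)).image (fun x => (i, x)))).subset ?_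
  rintro ⟨i, x⟩ hp
  simp only [Set.mem_iUnion]
  refine ⟨i, x, ?_, rfl⟩
  by_contra hx
  obtain ⟨h1, h2⟩ := hN i x (by simpa using hx)
  exact hp (Prod.ext h1 (by show _ = x; omega))

lemma finite_mem_houghton {n : ℕ} {f : Equiv.Perm (Fin n × ℕ)}
    (h : {p : Fin n × ℕ | f p ≠ p}.Finite) : f ∈ Houghton n := by
  intro i
  obtain ⟨B, hB⟩ := (h.image Prod.snd).bddAbove
  refine ⟨0, B + 1, fun x hx => ?_⟩
  have : f (i, x) = (i, x) := by
    by_contra hne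
    have := hB ⟨(i, x), hne, rfl⟩
    simp at this
    omega
  simp [this]

lemma swap_mem_houghton {n : ℕ} (a b : Fin n × ℕ) : Equiv.swap a b ∈ Houghton n := by
  apply finite_mem_houghton
  refine (Set.toFinite {a, b}).subset ?_
  intro p hp
  by_contra h
  simp only [Set.mem_insert_iff, Set.mem_singleton_iff, not_or] at h
  exact hp (Equiv.swap_apply_of_ne_of_ne h.1 h.2)

/-- Shift from ray `i` into ray `j`. -/
def shiftFun {n : ℕ} (i j : Fin n) (p : Fin n × ℕ) : Fin n × ℕ :=
  if p.1 = i then (if p.2 = 0 then (j, 0) else (i, p.2 - 1))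
  else if p.1 = j then (j, p.2 + 1) else p

lemma shiftFun_inv {n : ℕ} {i j : Fin n} (h : i ≠ j) (p : Fin n × ℕ) :
    shiftFun j i (shiftFun i j p) = p := by
  obtain ⟨a, x⟩ := p
  unfold shiftFun
  by_cases h1 : a = i
  · subst h1
    by_cases h2 : x = 0
    · simp [h2]
    · simp [h2, h]; omega
  · by_cases h2 : a = j
    · subst h2; simp [h1]
    · simp [h1, h2]

/-- The shift as a permutation. -/
def shiftPerm {n : ℕ} {i j : Fin n} (h : i ≠ j) : Equiv.Perm (Fin n × ℕ) where
  toFun := shiftFun i j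
  invFun := shiftFun j i
  left_inv := shiftFun_inv h
  right_inv := shiftFun_inv h.symm

lemma shiftPerm_mem {n : ℕ} {i j : Fin n} (h : i ≠ j) : shiftPerm h ∈ Houghton n := by
  intro a
  by_cases h1 : a = i
  · subst h1
    refine ⟨-1, 1, fun x hx => ?_⟩
    have hx0 : x ≠ 0 := by omega
    simp [shiftPerm, shiftFun, hx0]
    omega
  · by_cases h2 : a = j
    · subst h2
      exact ⟨1, 0, fun x hx => by simp [shiftPerm, shiftFun, h1]⟩
    · exact ⟨0, 0, fun x hx => by simp [shiftPerm, shiftFun, h1, h2]⟩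

open scoped commutatorElement in
lemma shift_commutator {n : ℕ} {i j k : Fin n} (hij : i ≠ j) (hik : i ≠ k) (hjk : j ≠ k) :
    ⁅shiftPerm hij, shiftPerm hik⁆ = Equiv.swap ((j, 0) : Fin n × ℕ) (k, 0) := by
  ext1 p
  show shiftFun i j (shiftFun i k (shiftFun j i (shiftFun k i p))) = _
  obtain ⟨a, x⟩ := p
  rw [Equiv.swap_apply_def]
  unfold shiftFun
  have := hij.symm
  have := hik.symm
  have := hjk.symm
  by_cases h1 : a = i
  · subst h1; simp [*]
  · by_cases h2 : a = j
    · subst h2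
      by_cases h0 : x = 0
      · simp [*]
      · simp [*]; omega
    · by_cases h3 : a = k
      · subst h3
        by_cases h0 : x = 0
        · simp [*]
        · simp [*]; omega
      · simp [*]

lemma all_swaps {α : Type*} [DecidableEq α] (K : Subgroup (Equiv.Perm α)) {p q : α}
    (hpq : p ≠ q) (h : Equiv.swap p q ∈ K)
    (hK : ∀ a b, ∀ f ∈ K, Equiv.swap a b * f * (Equiv.swap a b)⁻¹ ∈ K) (a b : α)
    (hab : a ≠ b) : Equiv.swap a b ∈ K := by
  have key : ∀ c, c ≠ p → Equiv.swap p c ∈ K := by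
    intro c hc
    have := hK q c _ h
    rwa [← Equiv.swap_apply_apply, Equiv.swap_apply_of_ne_of_ne hpq hc.symm,
      Equiv.swap_apply_left] at this
  by_cases hb : b = p
  · subst hb
    rw [Equiv.swap_comm]
    exact key a hab
  · have := hK p a _ (key b hb)
    rwa [← Equiv.swap_apply_apply, Equiv.swap_apply_left,
      Equiv.swap_apply_of_ne_of_ne hb hab.symm] at this

/-- For every `n ≥ 3`, the commutator subgroup of `H_n` consists exactly of the finitely
supported permutations of `{1,…,n} × ℕ`. -/
theorem commutator_eq_finitary_symmetric (n : ℕ) (hn : 3 ≤ n) (η : ↥(Houghton n)) :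
    η ∈ commutator ↥(Houghton n) ↔
      {p : Fin n × ℕ | (η : Equiv.Perm (Fin n × ℕ)) p ≠ p}.Finite := by
  constructor
  · intro h
    exact evFix_finite (commutator_le_evFix n h)
  · intro h
    have hij : (⟨0, by omega⟩ : Fin n) ≠ ⟨1, by omega⟩ := by simp
    have hik : (⟨0, by omega⟩ : Fin n) ≠ ⟨2, by omega⟩ := by simp
    have hjk : (⟨1, by omega⟩ : Fin n) ≠ ⟨2, by omega⟩ := by simp
    let K : Subgroup (Equiv.Perm (Fin n × ℕ)) :=
      (commutator (Houghton n)).map (Houghton n).subtype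
    have hbase : Equiv.swap ((⟨1, by omega⟩, 0) : Fin n × ℕ) (⟨2, by omega⟩, 0) ∈ K := by
      rw [← shift_commutator hij hik hjk]
      let g : Houghton n := ⟨shiftPerm hij, shiftPerm_mem hij⟩
      let k : Houghton n := ⟨shiftPerm hik, shiftPerm_mem hik⟩
      refine ⟨g * k * g⁻¹ * k⁻¹, ?_, rfl⟩
      rw [commutator_def]
      exact Subgroup.commutator_mem_commutator (Subgroup.mem_top _) (Subgroup.mem_top _)
    have hswaps := all_swaps K (by simp) hbase (by
      rintro a b _ ⟨f, hf, rfl⟩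
      refine ⟨⟨Equiv.swap a b, swap_mem_houghton a b⟩ * f *
        ⟨Equiv.swap a b, swap_mem_houghton a b⟩⁻¹, ?_, rfl⟩
      exact (inferInstance : (commutator (Houghton n)).Normal).conj_mem f hf _)
    have hle : Subgroup.closure {σ : Equiv.Perm (Fin n × ℕ) | σ.IsSwap} ≤ K := by
      rw [Subgroup.closure_le]
      rintro _ ⟨a, b, hab, rfl⟩
      exact hswaps a b hab
    have hmem : (η : Equiv.Perm (Fin n × ℕ)) ∈ K := by
      apply hle
      rw [mem_closure_isSwap']
      exact h
    obtain ⟨f, hf, hfe⟩ := hmem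
    have : f = η := Subtype.ext hfe
    rwa [← this]
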